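/- Let Z^{2⁴4⁴}(τ,z) = 2·(η(2τ)⁸/η(4τ)⁴)·φ_{−2,1}(τ,z) be the twined elliptic genus for the M₂₄ class 4a. Then for all τ ∈ ℍ and z ∈ ℂ, exp(−8πi z²/(4τ+1)) · Z^{2⁴4⁴}( τ/(4τ+1), z/(4τ+1) ) = −Z^{2⁴4⁴}(τ,z); that is, the slash of Z^{2⁴4⁴} by the matrix M_{1/4} = (1,0;4,1) representing the width-one cusp 1/4 of Γ₀(8) equals −Z^{2⁴4⁴}. -/

import Mathlib

open Complex


/-- The Dedekind eta function. -/
noncomputable def Eta (τ : ℂ) : ℂ :=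
  Complex.exp (Real.pi * I * τ / 12) *
    ∏' n : ℕ, (1 - Complex.exp (2 * Real.pi * I * ((n : ℂ) + 1) * τ))

noncomputable def θ₁ (τ z : ℂ) : ℂ :=
  -I * ∑' n : ℤ, (-1 : ℂ) ^ n *
    Complex.exp (Real.pi * I * ((n : ℂ) + 1 / 2) ^ 2 * τ + (2 * (n : ℂ) + 1) * Real.pi * I * z)

noncomputable def θ₂ (τ z : ℂ) : ℂ :=
  ∑' n : ℤ,
    Complex.exp (Real.pi * I * ((n : ℂ) + 1 / 2) ^ 2 * τ + (2 * (n : ℂ) + 1) * Real.pi * I * z)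

noncomputable def θ₃ (τ z : ℂ) : ℂ :=
  ∑' n : ℤ, Complex.exp (Real.pi * I * (n : ℂ) ^ 2 * τ + 2 * (n : ℂ) * Real.pi * I * z)

noncomputable def θ₄ (τ z : ℂ) : ℂ :=
  ∑' n : ℤ, (-1 : ℂ) ^ n *
    Complex.exp (Real.pi * I * (n : ℂ) ^ 2 * τ + 2 * (n : ℂ) * Real.pi * I * z)

/-- The weak Jacobi form φ_{0,1}. -/
noncomputable def φ01 (τ z : ℂ) : ℂ :=
  4 * ((θ₂ τ z / θ₂ τ 0) ^ 2 + (θ₃ τ z / θ₃ τ 0) ^ 2 + (θ₄ τ z / θ₄ τ 0) ^ 2)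

/-- The weak Jacobi form φ_{−2,1}. -/
noncomputable def φm21 (τ z : ℂ) : ℂ := θ₁ τ z ^ 2 / Eta τ ^ 6

/-- Twined elliptic genus for the class 4a (cycle shape 2^4 4^4). -/
noncomputable def Z4a (τ z : ℂ) : ℂ :=
  2 * (Eta (2 * τ) ^ 8 / Eta (4 * τ) ^ 4) * φm21 τ z

theorem Eta_eq_modularForm_eta (τ : ℂ) : Eta τ = ModularForm.eta τ := by
  unfold Eta ModularForm.eta
  congr 1
  · rw [Function.Periodic.qParam]
    congr 1
    push_cast
    ring
  · exact tprod_congr fun n => by rw [ModularForm.eta_q_eq_cexp]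

theorem Eta_neg_one_div_sq {τ : ℂ} (hτ : 0 < τ.im) :
    Eta (-1 / τ) ^ 2 = -I * τ * Eta τ ^ 2 := by
  have h := ModularForm.eta_comp_eq_csqrt_I_inv (show τ ∈ UpperHalfPlane.upperHalfPlaneSet from hτ)
  simp only [Function.comp_apply, Pi.smul_apply, Pi.mul_apply, smul_eq_mul] at h
  have hsq (w : ℂ) : sqrt w ^ 2 = w := by
    simp [sqrt]
  rw [Eta_eq_modularForm_eta, Eta_eq_modularForm_eta, h, mul_pow, mul_pow, inv_pow, hsq, hsq,
    inv_I]
  ring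

theorem Eta_add_one (τ : ℂ) : Eta (τ + 1) = exp (Real.pi * I / 12) * Eta τ := by
  unfold Eta
  rw [← mul_assoc, ← exp_add]
  congr 1
  · congr 1
    ring
  · refine tprod_congr fun n => ?_
    have : 2 * (Real.pi : ℂ) * I * ((n : ℂ) + 1) * (τ + 1) =
        2 * Real.pi * I * ((n : ℂ) + 1) * τ + ((n + 1 : ℕ) : ℂ) * (2 * Real.pi * I) := by
      push_cast
      ring
    rw [this, exp_add, exp_nat_mul_two_pi_mul_I, mul_one]

theorem Eta_ne_zero {τ : ℂ} (hτ : 0 < τ.im) : Eta τ ≠ 0 := by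
  rw [Eta_eq_modularForm_eta]
  exact ModularForm.eta_ne_zero hτ

theorem im_neg_one_div_pos {τ : ℂ} (hτ : 0 < τ.im) : 0 < (-1 / τ).im := by
  have h0 : τ ≠ 0 := by rintro rfl; simp at hτ
  have : 0 < normSq τ := normSq_pos.mpr h0
  rw [neg_div, one_div, neg_im, inv_im]
  rw [neg_div, neg_neg]
  exact div_pos hτ this

theorem exp_int_mul_pi_mul_I (n : ℤ) : exp (n * (Real.pi * I)) = (-1 : ℂ) ^ n := by
  rw [exp_int_mul, exp_pi_mul_I]

theorem θ₁_eq_jacobiTheta₂ (τ z : ℂ) :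
    θ₁ τ z = -I * exp (Real.pi * I * τ / 4 + Real.pi * I * z) *
      jacobiTheta₂ (z + 1 / 2 + τ / 2) τ := by
  unfold θ₁ jacobiTheta₂
  rw [mul_assoc, ← tsum_mul_left (a := exp _)]
  refine congrArg (-I * ·) (tsum_congr fun n => ?_)
  rw [jacobiTheta₂_term, ← exp_int_mul_pi_mul_I, ← exp_add, ← exp_add]
  congr 1
  ring

theorem θ₁_add_one (τ z : ℂ) : θ₁ (τ + 1) z = exp (Real.pi * I / 4) * θ₁ τ z := by
  unfold θ₁
  rw [mul_left_comm, ← tsum_mul_left (a := exp _)]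
  refine congrArg (-I * ·) (tsum_congr fun n => ?_)
  rw [mul_left_comm, ← exp_add]
  congr 1
  obtain ⟨k, hk⟩ := even_iff_exists_two_mul.mp (Int.even_mul_succ_self n)
  have hk' : (n : ℂ) * (n + 1) = 2 * k := by exact_mod_cast hk
  refine exp_eq_exp_iff_exists_int.mpr ⟨k, ?_⟩
  linear_combination (Real.pi * I : ℂ) * hk'

theorem θ₁_neg_one_div_sq {τ : ℂ} (hτ : 0 < τ.im) (z : ℂ) :
    θ₁ (-1 / τ) (z / τ) ^ 2 = I * τ * exp (2 * Real.pi * I * z ^ 2 / τ) * θ₁ τ z ^ 2 := by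
  have h0 : τ ≠ 0 := by rintro rfl; simp at hτ
  have hs : (((-I * τ) ^ (1 / 2 : ℂ)) ^ 2) = -I * τ := by
    rw [← cpow_nat_mul]
    norm_num
  have hJ := jacobiTheta₂_functional_equation (z - 1 / 2 + τ / 2) τ
  rw [← jacobiTheta₂_add_left, show z - 1 / 2 + τ / 2 + 1 = z + 1 / 2 + τ / 2 by ring,
    show (z - 1 / 2 + τ / 2) / τ = z / τ + 1 / 2 + (-1 / τ) / 2 by field_simp; ring] at hJ
  rw [θ₁_eq_jacobiTheta₂, θ₁_eq_jacobiTheta₂ τ z, hJ]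
  generalize jacobiTheta₂ (z / τ + 1 / 2 + (-1 / τ) / 2) (-1 / τ) = J
  simp only [mul_pow, div_pow, hs, one_pow, ← exp_nat_mul]
  have hexp : exp ((2 : ℕ) * (Real.pi * I * (-1 / τ) / 4 + Real.pi * I * (z / τ))) =
      -(exp (2 * Real.pi * I * z ^ 2 / τ) *
        exp ((2 : ℕ) * (Real.pi * I * τ / 4 + Real.pi * I * z)) *
        exp ((2 : ℕ) * (-Real.pi * I * (z - 1 / 2 + τ / 2) ^ 2 / τ))) := by
    rw [← exp_add, ← exp_add, ← exp_add_pi_mul_I]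
    refine exp_eq_exp_iff_exists_int.mpr ⟨-1, ?_⟩
    push_cast
    field_simp
    ring
  rw [hexp]
  field_simp

theorem exp_pi_mul_I_div_four_sq : exp (Real.pi * I / 4) ^ 2 = I := by
  rw [← exp_nat_mul]
  convert exp_pi_div_two_mul_I using 2
  push_cast
  ring

theorem exp_pi_mul_I_div_twelve_pow_six : exp (Real.pi * I / 12) ^ 6 = I := by
  rw [← exp_nat_mul]
  convert exp_pi_div_two_mul_I using 2
  push_cast
  ring

theorem φm21_add_one (τ z : ℂ) : φm21 (τ + 1) z = φm21 τ z := by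
  unfold φm21
  rw [θ₁_add_one, Eta_add_one, mul_pow, mul_pow, exp_pi_mul_I_div_four_sq,
    exp_pi_mul_I_div_twelve_pow_six, mul_div_mul_left _ _ I_ne_zero]

theorem φm21_neg_one_div {τ : ℂ} (hτ : 0 < τ.im) (z : ℂ) :
    φm21 (-1 / τ) (z / τ) = exp (2 * Real.pi * I * z ^ 2 / τ) / τ ^ 2 * φm21 τ z := by
  have h0 : τ ≠ 0 := by rintro rfl; simp at hτ
  have hE := Eta_ne_zero hτ
  have h6 : Eta (-1 / τ) ^ 6 = I * τ ^ 3 * Eta τ ^ 6 := by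
    have : Eta (-1 / τ) ^ 6 = (Eta (-1 / τ) ^ 2) ^ 3 := by ring
    rw [this, Eta_neg_one_div_sq hτ]
    linear_combination (-I * τ ^ 3 * Eta τ ^ 6) * I_sq
  unfold φm21
  rw [θ₁_neg_one_div_sq hτ, h6]
  have := I_ne_zero
  field_simp

theorem φm21_add_nat (τ z : ℂ) (k : ℕ) : φm21 (τ + k) z = φm21 τ z := by
  induction k with
  | zero => simp
  | succ k ih =>
    rw [Nat.cast_succ, ← add_assoc, φm21_add_one, ih]

theorem Eta_add_nat (τ : ℂ) (k : ℕ) :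
    Eta (τ + k) = exp (Real.pi * I / 12) ^ k * Eta τ := by
  induction k with
  | zero => simp
  | succ k ih =>
    rw [Nat.cast_succ, ← add_assoc, Eta_add_one, ih, pow_succ']
    ring

theorem nat_mul_add_one_ne_zero {τ : ℂ} (hτ : 0 < τ.im) (k : ℕ) : (k : ℂ) * τ + 1 ≠ 0 := by
  intro h
  have him := congrArg im h
  have hre := congrArg re h
  simp at him hre
  rcases him with rfl | him
  · simp at hre
  · exact hτ.ne' him

theorem im_neg_one_div_sub_nat_pos {τ : ℂ} (hτ : 0 < τ.im) (k : ℕ) :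
    0 < (-1 / τ - k).im := by
  simpa using im_neg_one_div_pos hτ

/-- The action of `(1,0;k,1)` on `η²`, up to its multiplier. -/
theorem Eta_div_nat_mul_add_one_sq {τ : ℂ} (hτ : 0 < τ.im) (k : ℕ) :
    exp (Real.pi * I / 12) ^ (2 * k) * Eta (τ / (k * τ + 1)) ^ 2 =
      (k * τ + 1) * Eta τ ^ 2 := by
  have h0 : τ ≠ 0 := by rintro rfl; simp at hτ
  have hk := nat_mul_add_one_ne_zero hτ k
  have hw := im_neg_one_div_sub_nat_pos hτ k
  have hw0 : -1 / τ - k ≠ 0 := by intro h; simp [h] at hw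
  have harg : -1 / (-1 / τ - k) = τ / (k * τ + 1) := by
    rw [div_eq_div_iff hw0 hk]
    field_simp
    ring
  have hS := Eta_neg_one_div_sq hw
  rw [harg] at hS
  have hT := Eta_add_nat (-1 / τ - k) k
  rw [sub_add_cancel] at hT
  have hS' := Eta_neg_one_div_sq hτ
  rw [hT, mul_pow, ← pow_mul, mul_comm k 2] at hS'
  have hwτ : (-1 / τ - k) * τ = -(k * τ + 1) := by
    field_simp
    ring
  rw [hS]
  linear_combination (-I * (-1 / τ - k)) * hS' + I ^ 2 * Eta τ ^ 2 * hwτ -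
    (k * τ + 1) * Eta τ ^ 2 * I_sq

theorem θ₁_neg_right (τ z : ℂ) : θ₁ τ (-z) = -θ₁ τ z := by
  unfold θ₁
  rw [← mul_neg, ← tsum_neg, ← (Equiv.subLeft (-1 : ℤ)).tsum_eq]
  refine congrArg (-I * ·) (tsum_congr fun n => ?_)
  rw [Equiv.subLeft_apply, zpow_sub₀ (by norm_num), zpow_neg_one, ← neg_mul]
  congr 1
  · rw [div_eq_mul_inv, ← inv_zpow]
    norm_num
  · congr 1
    push_cast
    ring

/-- The action of `(1,0;k,1)` on `φ_{−2,1}`. -/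
theorem φm21_div_nat_mul_add_one {τ : ℂ} (hτ : 0 < τ.im) (z : ℂ) (k : ℕ) :
    φm21 (τ / (k * τ + 1)) (z / (k * τ + 1)) =
      exp (2 * Real.pi * I * k * z ^ 2 / (k * τ + 1)) / (k * τ + 1) ^ 2 * φm21 τ z := by
  have h0 : τ ≠ 0 := by rintro rfl; simp at hτ
  have hk := nat_mul_add_one_ne_zero hτ k
  have hw := im_neg_one_div_sub_nat_pos hτ k
  have hwτ : -1 / τ - k = -((k * τ + 1) / τ) := by
    field_simp
    ring
  have hτarg : -1 / (-1 / τ - k) = τ / (k * τ + 1) := by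
    rw [hwτ]
    field_simp
  have hzarg : -z / τ / (-1 / τ - k) = z / (k * τ + 1) := by
    rw [hwτ]
    field_simp
  have hT := φm21_add_nat (-1 / τ - k) (-z / τ) k
  rw [sub_add_cancel, φm21_neg_one_div hτ] at hT
  have hS := φm21_neg_one_div hw (-z / τ)
  have hneg : φm21 τ (-z) = φm21 τ z := by
    rw [φm21, φm21, θ₁_neg_right, neg_sq]
  rw [hτarg, hzarg, ← hT, hneg, hwτ] at hS
  have hexp : exp (2 * Real.pi * I * k * z ^ 2 / (k * τ + 1)) =
      exp (2 * Real.pi * I * (-z / τ) ^ 2 / -((k * τ + 1) / τ)) *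
        exp (2 * Real.pi * I * (-z) ^ 2 / τ) := by
    rw [← exp_add]
    congr 1
    field_simp
    ring
  rw [hS, hexp]
  field_simp

/-- The slash of Z^{2⁴4⁴} by M_{1/4} = (1,0;4,1) equals −Z^{2⁴4⁴}. -/
theorem Z4a_slash_M_quarter (τ : ℂ) (hτ : 0 < τ.im) (z : ℂ) :
    Complex.exp (-8 * Real.pi * I * z ^ 2 / (4 * τ + 1)) *
        Z4a (τ / (4 * τ + 1)) (z / (4 * τ + 1)) =
      -Z4a τ z := by
  have hc := nat_mul_add_one_ne_zero hτ 4
  have hφ := φm21_div_nat_mul_add_one hτ z 4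
  have hA := Eta_div_nat_mul_add_one_sq (τ := 2 * τ) (by simpa using hτ) 2
  have hB := Eta_div_nat_mul_add_one_sq (τ := 4 * τ) (by simpa using hτ) 1
  have hB0 : Eta (4 * τ) ≠ 0 := Eta_ne_zero (by simpa using hτ)
  push_cast at hc hφ hA hB
  rw [show 2 * τ / (2 * (2 * τ) + 1) = 2 * (τ / (4 * τ + 1)) by ring_nf,
    show 2 * (2 * τ) + 1 = 4 * τ + 1 by ring] at hA
  rw [show 4 * τ / (1 * (4 * τ) + 1) = 4 * (τ / (4 * τ + 1)) by ring_nf, one_mul] at hB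
  have hB'0 : Eta (4 * (τ / (4 * τ + 1))) ≠ 0 := by
    intro h
    rw [h] at hB
    exact mul_ne_zero hc (pow_ne_zero 2 hB0) (by rw [← hB]; ring)
  have hexp : exp (-8 * Real.pi * I * z ^ 2 / (4 * τ + 1)) *
      exp (2 * Real.pi * I * 4 * z ^ 2 / (4 * τ + 1)) = 1 := by
    rw [← exp_add, ← exp_zero]
    congr 1
    ring
  have hζ : exp (Real.pi * I / 12) ^ 12 = -1 := by
    rw [show 12 = 6 * 2 by norm_num, pow_mul, exp_pi_mul_I_div_twelve_pow_six, I_sq]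
  have hζ0 : exp (Real.pi * I / 12) ≠ 0 := exp_ne_zero _
  unfold Z4a
  rw [hφ]
  generalize exp (Real.pi * I / 12) = ζ at *
  have hquot : Eta (2 * (τ / (4 * τ + 1))) ^ 8 / Eta (4 * (τ / (4 * τ + 1))) ^ 4 =
      -(4 * τ + 1) ^ 2 * (Eta (2 * τ) ^ 8 / Eta (4 * τ) ^ 4) := by
    have hA8 : ζ ^ 16 * Eta (2 * (τ / (4 * τ + 1))) ^ 8 = (4 * τ + 1) ^ 4 * Eta (2 * τ) ^ 8 := by
      convert congrArg (· ^ 4) hA using 1 <;> ring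
    have hB4 : ζ ^ 4 * Eta (4 * (τ / (4 * τ + 1))) ^ 4 = (4 * τ + 1) ^ 2 * Eta (4 * τ) ^ 4 := by
      convert congrArg (· ^ 2) hB using 1 <;> ring
    rw [← mul_div_assoc (-(4 * τ + 1) ^ 2), div_eq_div_iff (pow_ne_zero 4 hB'0) (pow_ne_zero 4 hB0)]
    apply mul_left_cancel₀ (mul_ne_zero (pow_ne_zero 16 hζ0) (pow_ne_zero 2 hc))
    generalize Eta (2 * (τ / (4 * τ + 1))) = A at *
    generalize Eta (4 * (τ / (4 * τ + 1))) = B at *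
    linear_combination (4 * τ + 1) ^ 2 * Eta (4 * τ) ^ 4 * hA8 -
      (4 * τ + 1) ^ 4 * Eta (2 * τ) ^ 8 * hB4 +
      (4 * τ + 1) ^ 4 * Eta (2 * τ) ^ 8 * ζ ^ 4 * B ^ 4 * hζ
  rw [hquot]
  generalize exp (-8 * Real.pi * I * z ^ 2 / (4 * τ + 1)) = E at *
  generalize exp (2 * Real.pi * I * 4 * z ^ 2 / (4 * τ + 1)) = F at *
  generalize Eta (2 * τ) = A at *
  field_simp
  linear_combination (-A ^ 8 * φm21 τ z) * hexp
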